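/- arXiv:1605.01302 — 9 statements merged into one kernel-verified Lean document; each statement's English description precedes it below -/
import Mathlib

section
/- Let α ∈ (0,1), λ ∈ [0,1), and let b, c be reals with 0 ≤ c ≤ 1 and 0 < b < 1. If b + α·c ≤ S(α,λ) and λ·b + c ≤ S(α,λ), then (α·c)/(1-b) ≤ (1-(c+λ·b))/(b-λ·b). -/
noncomputable def S (a lam : ℝ) : ℝ :=
  (1 - a * lam) * ((2 - a * lam - a) + (lam - 1) * Real.sqrt (4 * a - 3 * a ^ 2)) /
    (2 * (1 - a) * (a * lam - a * lam ^ 2 - a + 1))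

noncomputable def bPlus (a lam : ℝ) : ℝ :=
  ((2 - a * lam - a) + (1 - lam) * Real.sqrt (4 * a - 3 * a ^ 2)) /
    (2 * (-(a * lam ^ 2) + a * lam - a + 1))

noncomputable def bMinus (a lam : ℝ) : ℝ :=
  ((2 - a * lam - a) - (1 - lam) * Real.sqrt (4 * a - 3 * a ^ 2)) /
    (2 * (-(a * lam ^ 2) + a * lam - a + 1))

noncomputable def s1 (a lam b : ℝ) : ℝ :=
  ((a * lam ^ 2 - a * lam) * b ^ 2 + b - 1) / ((a * lam - a + 1) * b - 1)

noncomputable def s2 (a lam b : ℝ) : ℝ :=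
  ((1 - a) * b ^ 2 + (a * lam + a - 1) * b - a) / ((a * lam - a + 1) * b - 1)

noncomputable def f (a lam : ℝ) : ℝ :=
  2 * (1 - a) * (a * lam - a * lam ^ 2 - a + 1) /
    ((1 - a * lam) * ((2 - a * lam - a) + (lam - 1) * Real.sqrt (4 * a - 3 * a ^ 2)))

set_option maxHeartbeats 2000000 in
theorem stmt_0 (a lam b c : ℝ) (ha0 : 0 < a) (ha1 : a < 1)
    (hl0 : 0 ≤ lam) (hl1 : lam < 1) (hc0 : 0 ≤ c) (hc1 : c ≤ 1)
    (hb0 : 0 < b) (hb1 : b < 1)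
    (h1 : b + a * c ≤ S a lam) (h2 : lam * b + c ≤ S a lam) :
    (a * c) / (1 - b) ≤ (1 - (c + lam * b)) / (b - lam * b) := by
  have hk : 0 < 1 - lam := by linarith
  have ha : 0 < 1 - a := by linarith
  have hal : a * lam < 1 := by nlinarith
  have hu : 0 ≤ a * lam * (1 - lam) := by positivity
  obtain ⟨Q, hQ⟩ : ∃ Q, Q = a * lam - a * lam ^ 2 - a + 1 := ⟨_, rfl⟩
  have hQ0 : 0 < Q := by rw [hQ]; nlinarith
  obtain ⟨r, hr⟩ : ∃ r, r = Real.sqrt (4 * a - 3 * a ^ 2) := ⟨_, rfl⟩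
  have hr0 : 0 ≤ r := by rw [hr]; exact Real.sqrt_nonneg _
  have hr2 : r ^ 2 = 4 * a - 3 * a ^ 2 := by
    rw [hr]; exact Real.sq_sqrt (by nlinarith)
  obtain ⟨x, hx⟩ : ∃ x, x = ((2 - a * lam - a) - (1 - lam) * r) / (2 * Q) := ⟨_, rfl⟩
  obtain ⟨y, hy⟩ : ∃ y, y = ((2 - a * lam - a) + (1 - lam) * r) / (2 * Q) := ⟨_, rfl⟩
  have hxQ : 2 * Q * x = (2 - a * lam - a) - (1 - lam) * r := by
    rw [hx]; field_simp
  have hyQ : 2 * Q * y = (2 - a * lam - a) + (1 - lam) * r := by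
    rw [hy]; field_simp
  have hxy : x ≤ y := by
    have : 0 ≤ (1 - lam) * r := by positivity
    have h : 2 * Q * x ≤ 2 * Q * y := by linarith
    exact le_of_mul_le_mul_left h (by positivity)
  have hsum : Q * (x + y) = 2 - a * lam - a := by linarith
  have hprod : Q * (x * y) = 1 - a := by
    have h : 4 * Q * (Q * (x * y)) = 4 * Q * (1 - a) := by
      have : 4 * Q * (Q * (x * y)) = (2 * Q * x) * (2 * Q * y) := by ring
      rw [this, hxQ, hyQ, hQ]
      linear_combination (-(1 - lam) ^ 2) * hr2
    exact mul_left_cancel₀ (by positivity) h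
  have hroot : Q * x ^ 2 - (2 - a * lam - a) * x + (1 - a) = 0 := by
    rw [← hsum, ← hprod]; ring
  have hS : S a lam * (1 - a) = x * (1 - a * lam) := by
    unfold S
    rw [← hr, ← hQ, hx]
    field_simp
    ring
  obtain ⟨s, hs⟩ : ∃ s, s = S a lam := ⟨_, rfl⟩
  rw [← hs] at h1 h2 hS
  have hx0 : 0 < x := by
    have hy0 : 0 < y := by
      have h3 : 0 ≤ (1 - lam) * r := by positivity
      have h4 : 0 < 2 * Q * y := by linarith
      exact pos_of_mul_pos_right h4 (by positivity)
    have h5 : 0 < Q * y * x := by nlinarith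
    exact pos_of_mul_pos_right h5 (by positivity)
  obtain ⟨E, hE⟩ : ∃ E, E = 1 - a + a * lam * (1 - lam) * (2 - a) := ⟨_, rfl⟩
  have hEa : 1 - a ≤ E := by
    have : 0 ≤ a * lam * (1 - lam) * (2 - a) := mul_nonneg hu (by linarith)
    linarith
  have hE0 : 0 < E := by linarith
  have hP : -(1 - a) - 2 * a * lam + a ^ 2 * lam + lam ^ 2 * a * (2 - a) ^ 2 ≤ 0 := by
    have e : -(1 - a) - 2 * a * lam + a ^ 2 * lam + lam ^ 2 * a * (2 - a) ^ 2
      = -((1 - lam) * (1 - a)) - lam * (1 - a) ^ 3 - a * (2 - a) ^ 2 * (lam * (1 - lam)) := by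
      ring
    rw [e]
    have p1 : 0 ≤ (1 - lam) * (1 - a) := by positivity
    have p2 : 0 ≤ lam * (1 - a) ^ 3 := by positivity
    have p3 : 0 ≤ a * (2 - a) ^ 2 * (lam * (1 - lam)) := by positivity
    linarith
  have hqz : (1 - a) * Q - (2 - a * lam - a) * E + E ^ 2 ≤ 0 := by
    have e : (1 - a) * Q - (2 - a * lam - a) * E + E ^ 2 = a * (1 - lam) ^ 2 *
      (-(1 - a) - 2 * a * lam + a ^ 2 * lam + lam ^ 2 * a * (2 - a) ^ 2) := by
      rw [hQ, hE]; ring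
    rw [e]
    exact mul_nonpos_of_nonneg_of_nonpos (by positivity) hP
  have hxE : x * E ≤ 1 - a := by
    by_contra hcon
    push Not at hcon
    have hyE : 1 - a < y * E := lt_of_lt_of_le hcon (mul_le_mul_of_nonneg_right hxy hE0.le)
    have h3 : 0 < Q * ((x * E - (1 - a)) * (y * E - (1 - a))) := by
      apply mul_pos hQ0; apply mul_pos <;> linarith
    have e : Q * ((x * E - (1 - a)) * (y * E - (1 - a)))
      = (1 - a) * ((1 - a) * Q - (2 - a * lam - a) * E + E ^ 2) := by
      linear_combination E ^ 2 * hprod - E * (1 - a) * hsum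
    rw [e] at h3
    exact absurd h3 (not_lt.mpr (mul_nonpos_of_nonneg_of_nonpos ha.le hqz))
  have hx1 : x ≤ 1 := by nlinarith
  have hs1 : a * lam * (1 - lam) * x ^ 2 ≤ 1 - s := by
    have h3 : 0 ≤ x * ((1 - a) - x * E) := mul_nonneg hx0.le (by linarith)
    have e : (1 - a) * (1 - s - a * lam * (1 - lam) * x ^ 2) = x * ((1 - a) - x * E) := by
      rw [hQ] at hroot
      rw [hE]
      linear_combination hroot - hS
    rw [← e] at h3
    have := nonneg_of_mul_nonneg_right h3 ha
    linarith
  have hs1' : s ≤ 1 := by nlinarith [mul_nonneg hu (sq_nonneg x)]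
  have hD : 0 < (1 - b) + a * b * (1 - lam) := by
    have : 0 ≤ a * b * (1 - lam) := by positivity
    linarith
  have hx1' : x < 1 := by
    rcases hx1.lt_or_eq with h | h
    · exact h
    · exfalso
      rw [h, hQ] at hroot
      have : 0 < a * (1 - lam) ^ 2 := by positivity
      nlinarith
  have key : c * ((1 - b) + a * b * (1 - lam)) ≤ (1 - b) * (1 - lam * b) := by
    rcases le_total b x with hbx | hbx
    · have h3 : c * ((1 - b) + a * b * (1 - lam)) ≤
          (s - lam * b) * ((1 - b) + a * b * (1 - lam)) :=
        mul_le_mul_of_nonneg_right (by linarith) hD.le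
      have h4 : a * lam * (1 - lam) * (b * x) ≤ 1 - s := by
        have : a * lam * (1 - lam) * (b * x) ≤ a * lam * (1 - lam) * x ^ 2 :=
          mul_le_mul_of_nonneg_left (by nlinarith) hu
        linarith
      have e0 : (1 - a) * ((s - lam * x) * ((1 - x) + a * x * (1 - lam))
          - (1 - x) * (1 - lam * x)) = 0 := by
        rw [hQ] at hroot
        linear_combination ((1 - x) + a * x * (1 - lam)) * hS - hroot
      have e1 := (mul_eq_zero.mp e0).resolve_left ha.ne'
      have e : x * ((1 - b) * (1 - lam * b) - (s - lam * b) * ((1 - b) + a * b * (1 - lam)))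
          = (x - b) * (1 - s - a * lam * (1 - lam) * (b * x)) := by
        linear_combination (-b) * e1
      have h5 : 0 ≤ (x - b) * (1 - s - a * lam * (1 - lam) * (b * x)) :=
        mul_nonneg (by linarith) (by linarith)
      rw [← e] at h5
      have := nonneg_of_mul_nonneg_right h5 hx0
      linarith
    · have h3 : (a * c) * ((1 - b) + a * b * (1 - lam)) ≤
          (s - b) * ((1 - b) + a * b * (1 - lam)) :=
        mul_le_mul_of_nonneg_right (by linarith) hD.le
      have e0 : (1 - a) * ((s - x) * ((1 - x) + a * x * (1 - lam))
          - a * ((1 - x) * (1 - lam * x))) = 0 := by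
        rw [hQ] at hroot
        linear_combination ((1 - x) + a * x * (1 - lam)) * hS - a * hroot
      have e1 := (mul_eq_zero.mp e0).resolve_left ha.ne'
      have e : (1 - x) * (a * ((1 - b) * (1 - lam * b))
          - (s - b) * ((1 - b) + a * b * (1 - lam)))
          = (b - x) * (a * (1 - lam) * (1 - s)) + (1 - a) * ((b - x) * (1 - b) * (1 - x)) := by
        linear_combination (-(1 - b)) * e1
      have h5 : 0 ≤ (b - x) * (a * (1 - lam) * (1 - s))
          + (1 - a) * ((b - x) * (1 - b) * (1 - x)) := by
        have q1 : 0 ≤ b - x := by linarith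
        have q2 : 0 ≤ 1 - s := by linarith
        have q3 : 0 ≤ 1 - b := by linarith
        have q4 : 0 ≤ 1 - x := by linarith
        positivity
      rw [← e] at h5
      have h6 := nonneg_of_mul_nonneg_right h5 (by linarith : 0 < 1 - x)
      have h7 : a * (c * ((1 - b) + a * b * (1 - lam))) ≤ a * ((1 - b) * (1 - lam * b)) := by
        linarith
      exact le_of_mul_le_mul_left h7 ha0
  have hbl : 0 < b - lam * b := by nlinarith
  rw [div_le_div_iff₀ (by linarith) hbl]
  linarith
end

section
/- Let α ∈ (0,1), λ ∈ [0,1). Set b₀ = b₋(α,λ) and c₀ = (1-λ)·b₀/(1-α). Then 0 ≤ b₀ ≤ 1, 0 ≤ c₀ ≤ 1, b₀ + α·c₀ = S(α,λ), λ·b₀ + c₀ = S(α,λ), and λ·b₀² + (αλ-α+1)·b₀·c₀ - (λ+1)·b₀ - c₀ + 1 = 0. -/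
theorem stmt_2 (a lam : ℝ) (ha0 : 0 < a) (ha1 : a < 1)
    (hl0 : 0 ≤ lam) (hl1 : lam < 1) :
    0 ≤ bMinus a lam ∧ bMinus a lam ≤ 1 ∧
    0 ≤ (1 - lam) * bMinus a lam / (1 - a) ∧ (1 - lam) * bMinus a lam / (1 - a) ≤ 1 ∧
    bMinus a lam + a * ((1 - lam) * bMinus a lam / (1 - a)) = S a lam ∧
    lam * bMinus a lam + (1 - lam) * bMinus a lam / (1 - a) = S a lam ∧
    lam * (bMinus a lam) ^ 2 +
      (a * lam - a + 1) * bMinus a lam * ((1 - lam) * bMinus a lam / (1 - a)) -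
      (lam + 1) * bMinus a lam - (1 - lam) * bMinus a lam / (1 - a) + 1 = 0 := by 
  have hu : 0 < 1 - lam := by linarith
  have hk : 0 < 1 - a := by linarith
  have hD : 0 < -(a * lam ^ 2) + a * lam - a + 1 := by
    nlinarith [mul_nonneg (mul_nonneg ha0.le hl0) hu.le]
  have hr0 : 0 ≤ Real.sqrt (4 * a - 3 * a ^ 2) := Real.sqrt_nonneg _
  have hr2 : Real.sqrt (4 * a - 3 * a ^ 2) ^ 2 = 4 * a - 3 * a ^ 2 :=
    Real.sq_sqrt (by nlinarith)
  have hS : S a lam = (1 - a * lam) * bMinus a lam / (1 - a) := by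
    unfold S bMinus
    have e : a * lam - a * lam ^ 2 - a + 1 = -(a * lam ^ 2) + a * lam - a + 1 := by ring
    rw [e]
    generalize -(a * lam ^ 2) + a * lam - a + 1 = D at hD
    field_simp
    ring
  have hb : 2 * (-(a * lam ^ 2) + a * lam - a + 1) * bMinus a lam
      = (2 - a * lam - a) - (1 - lam) * Real.sqrt (4 * a - 3 * a ^ 2) := by
    unfold bMinus
    exact mul_div_cancel₀ _ (by positivity)
  rw [hS]
  generalize bMinus a lam = b at *
  generalize Real.sqrt (4 * a - 3 * a ^ 2) = r at *
  have hur : 0 ≤ (1 - lam) * r := mul_nonneg hu.le hr0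
  obtain ⟨D, hDe⟩ : ∃ D, D = -(a * lam ^ 2) + a * lam - a + 1 := ⟨_, rfl⟩
  obtain ⟨P, hPe⟩ : ∃ P, P = 2 - a * lam - a := ⟨_, rfl⟩
  rw [← hDe] at hD
  rw [← hDe, ← hPe] at hb
  have hP : 0 < P := by rw [hPe]; nlinarith
  have hdisc : ((1 - lam) * r) ^ 2 = P ^ 2 - 4 * D * (1 - a) := by
    rw [mul_pow, hr2, hPe, hDe]; ring
  have hq : D * b ^ 2 - P * b + (1 - a) = 0 := by
    have h1 : (1 - lam) * r = P - 2 * D * b := by linarith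
    rw [h1] at hdisc
    have : 4 * D * (D * b ^ 2 - P * b + (1 - a)) = 0 := by linarith
    rcases mul_eq_zero.mp this with h | h
    · linarith
    · exact h
  have hbP : 2 * D * b ≤ P := by linarith
  have hb0 : 0 ≤ b := by
    by_contra h
    push Not at h
    nlinarith [mul_pos hP (neg_pos.mpr h), mul_nonneg hD.le (sq_nonneg b)]
  have key : ∀ t, D * t ^ 2 - P * t + (1 - a) ≤ 0 → b ≤ t := by
    intro t ht
    by_contra h
    push Not at h
    have h1 : 0 < P - D * (t + b) := by nlinarith [mul_pos hD (sub_pos.mpr h)]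
    nlinarith [mul_pos (sub_pos.mpr h) h1]
  have hb1 : b ≤ 1 := by
    apply key
    rw [hDe, hPe]
    nlinarith [mul_nonneg ha0.le (sq_nonneg (1 - lam))]
  have hc : (1 - lam) * b ≤ 1 - a := by
    by_cases hcase : 1 - lam ≤ 1 - a
    · nlinarith
    · push Not at hcase
      have h1 : b ≤ (1 - a) / (1 - lam) := by
        apply key
        have h2 : D * ((1 - a) / (1 - lam)) ^ 2 - P * ((1 - a) / (1 - lam)) + (1 - a)
            = (1 - a) ^ 2 * ((1 - a) - (2 - a) * (1 - lam) + (1 - a) * (1 - lam) ^ 2)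
              / (1 - lam) ^ 2 := by
          rw [hDe, hPe]
          field_simp
          ring
        rw [h2]
        apply div_nonpos_of_nonpos_of_nonneg _ (sq_nonneg _)
        apply mul_nonpos_of_nonneg_of_nonpos (sq_nonneg _)
        have h3 : 0 ≤ (a - lam) * lam := mul_nonneg (by linarith) hl0
        nlinarith [mul_nonneg hk.le h3, mul_nonneg ha0.le hl0, mul_pos ha0 hk]
      rw [le_div_iff₀ hu] at h1
      linarith
  refine ⟨hb0, hb1, by positivity, (div_le_one hk).mpr hc, ?_, ?_, ?_⟩
  · field_simp
    ring
  · field_simp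
    ring
  · have : lam * b ^ 2 + (a * lam - a + 1) * b * ((1 - lam) * b / (1 - a)) -
      (lam + 1) * b - (1 - lam) * b / (1 - a) + 1
        = (D * b ^ 2 - P * b + (1 - a)) / (1 - a) := by
      rw [hDe, hPe]
      field_simp
      ring
    rw [this, hq, zero_div]
end

section
/- For all α ∈ (0,1) and λ ∈ [0,1): b₊(α,λ) > 1 and 0 ≤ b₋(α,λ) ≤ 1. -/
theorem stmt_5 (a lam : ℝ) (ha0 : 0 < a) (ha1 : a < 1)
    (hl0 : 0 ≤ lam) (hl1 : lam < 1) :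
    bPlus a lam > 1 ∧ 0 ≤ bMinus a lam ∧ bMinus a lam ≤ 1 := by
  have hs2 := Real.sq_sqrt (show (0:ℝ) ≤ 4 * a - 3 * a ^ 2 by nlinarith)
  have hsa : a < Real.sqrt (4 * a - 3 * a ^ 2) := by
    apply Real.lt_sqrt_of_sq_lt
    nlinarith
  unfold bPlus bMinus
  set s := Real.sqrt (4 * a - 3 * a ^ 2) with hs
  have hl : 0 < 1 - lam := by linarith
  have hal : 0 ≤ a * lam := by positivity
  have hal1 : a * lam < a := by nlinarith
  have hD : 0 < -(a * lam ^ 2) + a * lam - a + 1 := by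
    nlinarith [mul_nonneg hal hl.le]
  have h1 : 0 < (1 - lam) * (s + a * (1 - 2 * lam)) := mul_pos hl (by nlinarith)
  have h2 : 0 < (1 - lam) * (s - a * (1 - 2 * lam)) := mul_pos hl (by nlinarith)
  refine ⟨?_, ?_, ?_⟩
  · rw [gt_iff_lt, one_lt_div (by linarith)]
    nlinarith
  · apply div_nonneg _ (by linarith)
    rw [sub_nonneg]
    refine (abs_le_of_sq_le_sq' ?_ (by linarith)).2
    have h3 : (2 - a * lam - a) ^ 2 - ((1 - lam) * s) ^ 2
        = 4 * ((1 - a) * (-(a * lam ^ 2) + a * lam - a + 1)) := by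
      rw [mul_pow, hs2]; ring
    have := mul_pos (sub_pos.2 ha1) hD
    linarith
  · rw [div_le_one (by linarith)]
    nlinarith
end

section
/- For α ∈ (0,1) and λ ∈ [0,1), the function s₁(b) = ((αλ²-αλ)·b² + b - 1)/((αλ-α+1)·b - 1) is strictly decreasing (strictly antitone) on the interval (0,1]. -/
theorem stmt_6 (a lam : ℝ) (ha0 : 0 < a) (ha1 : a < 1)
    (hl0 : 0 ≤ lam) (hl1 : lam < 1) :
    StrictAntiOn (fun b => s1 a lam b) (Set.Ioc (0 : ℝ) 1) := by 
  rintro x ⟨hx0, hx1⟩ y ⟨hy0, hy1⟩ hxy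
  have hc : ∃ c, c = a * lam - a + 1 := ⟨_, rfl⟩
  obtain ⟨c, hc⟩ := hc
  have hm : 0 < a * (1 - lam) := mul_pos ha0 (by linarith)
  have hc1 : c < 1 := by nlinarith
  have hc0 : 0 < c := by nlinarith [mul_nonneg ha0.le hl0]
  have hcx : 0 < 1 - c * x := by nlinarith
  have hcy : 0 < 1 - c * y := by nlinarith
  have h1 : x + y - c * x * y ≤ 2 - c := by
    nlinarith [mul_nonneg (sub_nonneg.2 hx1) hcy.le, mul_nonneg (sub_nonneg.2 hy1) (sub_nonneg.2 hc1.le)]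
  have h2 : lam * (x + y - c * x * y) ≤ lam * (2 - c) := mul_le_mul_of_nonneg_left h1 hl0
  have h3 : lam * (2 - c) < 1 := by
    have h4 : a * lam < 1 := by nlinarith
    have h5 : 0 < (1 - lam) * (1 - a * lam) := mul_pos (by linarith) (by linarith)
    rw [hc]; nlinarith
  have key : 0 < (y - x) * (a * (1 - lam)) * (1 - lam * (x + y - c * x * y)) :=
    mul_pos (mul_pos (by linarith) hm) (by linarith)
  have e : ∀ b, s1 a lam b = (1 - b + (a * lam - a * lam ^ 2) * b ^ 2) / (1 - c * b) := by
    intro b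
    unfold s1
    rw [← neg_div_neg_eq, hc]
    congr 1 <;> ring
  show s1 a lam y < s1 a lam x
  rw [e, e, div_lt_div_iff₀ hcy hcx]
  have hid : (1 - x + (a * lam - a * lam ^ 2) * x ^ 2) * (1 - c * y)
      - (1 - y + (a * lam - a * lam ^ 2) * y ^ 2) * (1 - c * x)
      = (y - x) * (a * (1 - lam)) * (1 - lam * (x + y - c * x * y)) := by
    rw [hc]; ring
  linarith
end

section
/- For α ∈ (0,1) and λ ∈ [0,1), the function s₂(b) = ((1-α)·b² + (αλ+α-1)·b - α)/((αλ-α+1)·b - 1) is strictly increasing (strictly monotone) on the interval (0,1]. -/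
theorem stmt_7 (a lam : ℝ) (ha0 : 0 < a) (ha1 : a < 1)
    (hl0 : 0 ≤ lam) (hl1 : lam < 1) :
    StrictMonoOn (fun b => s2 a lam b) (Set.Ioc (0 : ℝ) 1) := by 
  rintro x ⟨hx0, hx1⟩ y ⟨hy0, hy1⟩ hxy
  have hc : 0 < a * (1 - lam) := mul_pos ha0 (by linarith)
  have hc0 : 0 < a * lam - a + 1 := by nlinarith [mul_nonneg ha0.le hl0]
  have hD : ∀ b : ℝ, 0 < b → b ≤ 1 → (a * lam - a + 1) * b - 1 < 0 := by
    intro b hb0 hb1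
    nlinarith [mul_le_mul_of_nonneg_left hb1 hc0.le]
  have hDx := hD x hx0 hx1
  have hDy := hD y hy0 hy1
  have hxy1 : 0 < 1 - x * y := by nlinarith
  have hB : 0 < (1 - x) * (1 - y) + a * (1 - lam) * (1 - x * y) := by
    have h1 : 0 ≤ (1 - x) * (1 - y) := mul_nonneg (by linarith) (by linarith)
    have h2 := mul_pos hc hxy1
    linarith
  have hP : 0 < (y - x) * (1 - a) * ((1 - x) * (1 - y) + a * (1 - lam) * (1 - x * y)) :=
    mul_pos (mul_pos (by linarith) (by linarith)) hB
  show s2 a lam x < s2 a lam y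
  rw [← sub_pos]
  have key : s2 a lam y - s2 a lam x =
      (y - x) * (1 - a) * ((1 - x) * (1 - y) + a * (1 - lam) * (1 - x * y)) /
        (((a * lam - a + 1) * y - 1) * ((a * lam - a + 1) * x - 1)) := by
    unfold s2
    rw [div_sub_div _ _ hDy.ne hDx.ne]
    congr 1
    ring
  rw [key]
  exact div_pos hP (mul_pos_of_neg_of_neg hDy hDx)
end

section
/- Let α ∈ (0,1), λ ∈ [0,1), and set b₀ = b₋(α,λ). Then s₁(b₀) = s₂(b₀) = S(α,λ), and for every b ∈ (0,1]: if b ≤ b₀ then s₁(b) ≥ S(α,λ), while if b₀ ≤ b then s₂(b) ≥ S(α,λ). In other words, the piecewise function equal to s₁ on (0,b₀] and to s₂ on (b₀,1] attains its minimum value S(α,λ) at b = b₀. -/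
theorem stmt_8 (a lam : ℝ) (ha0 : 0 < a) (ha1 : a < 1)
    (hl0 : 0 ≤ lam) (hl1 : lam < 1) :
    s1 a lam (bMinus a lam) = S a lam ∧ s2 a lam (bMinus a lam) = S a lam ∧
    ∀ b ∈ Set.Ioc (0 : ℝ) 1,
      (b ≤ bMinus a lam → s1 a lam b ≥ S a lam) ∧
      (bMinus a lam ≤ b → s2 a lam b ≥ S a lam) := by
  have hD : 0 < -(a * lam ^ 2) + a * lam - a + 1 := by
    nlinarith [mul_nonneg (mul_nonneg ha0.le hl0) (sub_nonneg.2 hl1.le)]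
  have hr0 := Real.sqrt_nonneg (4 * a - 3 * a ^ 2)
  have hr2 : Real.sqrt (4 * a - 3 * a ^ 2) ^ 2 = 4 * a - 3 * a ^ 2 :=
    Real.sq_sqrt (by nlinarith)
  have hra : a ≤ Real.sqrt (4 * a - 3 * a ^ 2) := Real.le_sqrt_of_sq_le (by nlinarith)
  have hb : 2 * (-(a * lam ^ 2) + a * lam - a + 1) * bMinus a lam =
      (2 - a * lam - a) - (1 - lam) * Real.sqrt (4 * a - 3 * a ^ 2) := by
    unfold bMinus
    exact mul_div_cancel₀ _ (by positivity)
  have hS : S a lam = (1 - a * lam) * bMinus a lam / (1 - a) := by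
    have h1 : (1 - a) ≠ 0 := by linarith
    have h2 : a * lam - a * lam ^ 2 - a + 1 = -(a * lam ^ 2) + a * lam - a + 1 := by ring
    unfold S
    rw [h2, div_eq_div_iff (by positivity) h1]
    linear_combination (-(1 - a * lam) * (1 - a)) * hb
  generalize Real.sqrt (4 * a - 3 * a ^ 2) = r at *
  generalize bMinus a lam = x at *
  have hq : (-(a * lam ^ 2) + a * lam - a + 1) * x ^ 2 - (2 - a * lam - a) * x + (1 - a) = 0 := by
    have h4 : 4 * (-(a * lam ^ 2) + a * lam - a + 1) *
      ((-(a * lam ^ 2) + a * lam - a + 1) * x ^ 2 - (2 - a * lam - a) * x + (1 - a)) = 0 := by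
      linear_combination (2 * (-(a * lam ^ 2) + a * lam - a + 1) * x - (2 - a * lam - a)
        - (1 - lam) * r) * hb + (1 - lam) ^ 2 * hr2
    exact (mul_eq_zero.1 h4).resolve_left (by positivity)
  have hx1 : x ≤ 1 := by
    have : (1 - lam) * (a * (1 - 2 * lam)) ≤ (1 - lam) * r :=
      mul_le_mul_of_nonneg_left (by nlinarith) (by linarith)
    by_contra! h
    nlinarith
  have hc0 : 0 < a * lam - a + 1 := by nlinarith
  have hc1 : a * lam - a + 1 < 1 := by nlinarith
  have hden : ∀ b ≤ 1, 0 < 1 - (a * lam - a + 1) * b := by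
    intro b hb
    nlinarith
  have hdx := hden x hx1
  have h1a : 0 < 1 - a := by linarith
  have e1 : s1 a lam x = S a lam := by
    rw [hS]
    unfold s1
    rw [div_eq_div_iff (by linarith) h1a.ne']
    linear_combination -hq
  have e2 : s2 a lam x = S a lam := by
    rw [← e1]
    unfold s1 s2
    congr 1
    linear_combination hq
  refine ⟨e1, e2, fun b hbm => ⟨fun h => ?_, fun h => ?_⟩⟩
  · have hdb := hden b hbm.2
    have hm : 0 ≤ (1 - b) * (1 - (a * lam - a + 1) * x) := mul_nonneg (by linarith [hbm.2]) hdx.le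
    have hm2 : 0 ≤ (1 - x) * (1 - (a * lam - a + 1)) := mul_nonneg (by linarith) (by linarith)
    have hk : b + x - (a * lam - a + 1) * b * x ≤ 1 + a * (1 - lam) := by linarith
    have hk2 : lam * (b + x - (a * lam - a + 1) * b * x) ≤ 1 := by
      have := mul_le_mul_of_nonneg_left hk hl0
      have h3 : 0 ≤ lam * ((1 - a) * (1 - lam)) :=
        mul_nonneg hl0 (mul_nonneg h1a.le (by linarith))
      nlinarith [sq_nonneg (1 - lam)]
    have key : 0 ≤ (x - b) * ((a * (1 - lam)) * (1 - lam * (b + x - (a * lam - a + 1) * b * x))) :=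
      mul_nonneg (by linarith) (mul_nonneg (mul_nonneg ha0.le (by linarith)) (by linarith))
    rw [← e1, ge_iff_le]
    unfold s1
    rw [← neg_div_neg_eq, ← neg_div_neg_eq ((a * lam ^ 2 - a * lam) * b ^ 2 + b - 1),
      div_le_div_iff₀ (by linarith) (by linarith)]
    linarith
  · have hdb := hden b hbm.2
    have hm : 0 ≤ (1 - a) * ((1 - b) * (1 - (a * lam - a + 1) * x)) :=
      mul_nonneg h1a.le (mul_nonneg (by linarith [hbm.2]) hdx.le)
    have hm2 : 0 ≤ (1 - x) * (a * (1 - a) * (1 - lam)) :=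
      mul_nonneg (by linarith) (mul_nonneg (by positivity) (by linarith))
    have key : 0 ≤ (b - x) * (a * (a * lam - a + 1) + (1 - a - a * lam)
        - (1 - a) * (b + x - (a * lam - a + 1) * b * x)) :=
      mul_nonneg (by linarith) (by linarith)
    rw [← e2, ge_iff_le]
    unfold s2
    rw [← neg_div_neg_eq, ← neg_div_neg_eq ((1 - a) * b ^ 2 + (a * lam + a - 1) * b - a),
      div_le_div_iff₀ (by linarith) (by linarith)]
    linarith
end

section
/- For all α ∈ (0,1) and λ ∈ [0,1), the speedup factor satisfies f(α,λ) ≤ 4/3; moreover f(1/3, 0) = 4/3, so the maximum value 4/3 of the speedup factor function is attained at α = 1/3, λ = 0. -/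
theorem stmt_9 :
    (∀ a lam : ℝ, 0 < a → a < 1 → 0 ≤ lam → lam < 1 → f a lam ≤ 4 / 3) ∧
    f (1 / 3) 0 = 4 / 3 := by
  constructor
  · intro a l ha ha1 hl hl1
    unfold f
    have hnn : 0 ≤ 4 * a - 3 * a ^ 2 := by nlinarith
    have hs0 := Real.sqrt_nonneg (4 * a - 3 * a ^ 2)
    have hs2 := Real.sq_sqrt hnn
    have hs : Real.sqrt (4 * a - 3 * a ^ 2) ≤ a + 2 / 3 := by
      apply Real.sqrt_le_iff.mpr
      constructor
      · linarith
      · nlinarith [sq_nonneg (2 * a - 2 / 3)]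
    set s := Real.sqrt (4 * a - 3 * a ^ 2) with hsdef
    have hal : a * l < 1 := by nlinarith
    have hE : 0 < (2 - a * l - a) + (1 - l) * s := by
      have := mul_nonneg (sub_nonneg.mpr hl1.le) hs0
      linarith
    have hq : 0 < a * l - a * l ^ 2 - a + 1 := by
      nlinarith [mul_nonneg (mul_nonneg ha.le hl) (sub_nonneg.mpr hl1.le)]
    have hDE : ((2 - a * l - a) + (l - 1) * s) * ((2 - a * l - a) + (1 - l) * s)
        = 4 * (1 - a) * (a * l - a * l ^ 2 - a + 1) := by
      linear_combination (-(1 - l) ^ 2) * hs2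
    have hD : 0 < (2 - a * l - a) + (l - 1) * s := by
      refine pos_of_mul_pos_left ?_ hE.le
      rw [hDE]
      exact mul_pos (by linarith) hq
    have hE2 : 3 * ((2 - a * l - a) + (1 - l) * s) ≤ 8 * (1 - a * l) := by
      nlinarith [mul_le_mul_of_nonneg_left hs (sub_nonneg.mpr hl1.le),
        mul_nonneg hl (sub_nonneg.mpr ha1.le)]
    rw [div_le_iff₀ (mul_pos (by linarith) hD)]
    nlinarith [mul_le_mul_of_nonneg_left hE2 hD.le]
  · unfold f
    have h : (4 * (1 / 3) - 3 * (1 / 3) ^ 2 : ℝ) = 1 := by norm_num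
    rw [h, Real.sqrt_one]
    norm_num
end

section
/- For all α ∈ (0,1) and λ ∈ [0,1): 0 < S(α,λ) ≤ 1; equivalently, the speedup factor f(α,λ) = 1/S(α,λ) satisfies f(α,λ) ≥ 1. -/
theorem stmt_10 (a lam : ℝ) (ha0 : 0 < a) (ha1 : a < 1)
    (hl0 : 0 ≤ lam) (hl1 : lam < 1) :
    0 < S a lam ∧ S a lam ≤ 1 ∧ 1 / S a lam ≥ 1 := by 
  have hq2 : Real.sqrt (4 * a - 3 * a ^ 2) ^ 2 = 4 * a - 3 * a ^ 2 :=
    Real.sq_sqrt (by nlinarith)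
  have hqa : a ≤ Real.sqrt (4 * a - 3 * a ^ 2) :=
    Real.le_sqrt_of_sq_le (by nlinarith)
  have hal : 0 < 1 - a * lam := by nlinarith
  have h1a : 0 < 1 - a := by linarith
  have hD : 0 < a * lam - a * lam ^ 2 - a + 1 := by
    nlinarith [mul_nonneg (mul_nonneg ha0.le hl0) (sub_nonneg.2 hl1.le)]
  have key : S a lam = 2 * (1 - a * lam) /
      ((2 - a * lam - a) + (1 - lam) * Real.sqrt (4 * a - 3 * a ^ 2)) ∧
      0 < (2 - a * lam - a) + (1 - lam) * Real.sqrt (4 * a - 3 * a ^ 2) ∧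
      2 * (1 - a * lam) ≤
        (2 - a * lam - a) + (1 - lam) * Real.sqrt (4 * a - 3 * a ^ 2) := by
    unfold S
    generalize Real.sqrt (4 * a - 3 * a ^ 2) = q at *
    have hle : 2 * (1 - a * lam) ≤ (2 - a * lam - a) + (1 - lam) * q := by
      nlinarith [mul_le_mul_of_nonneg_left hqa (sub_nonneg.2 hl1.le)]
    have hpos : 0 < (2 - a * lam - a) + (1 - lam) * q := by linarith
    refine ⟨?_, hpos, hle⟩
    rw [div_eq_div_iff (by positivity) hpos.ne']
    linear_combination (-(1 - a * lam) * (1 - lam) ^ 2) * hq2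
  obtain ⟨hS, hpos, hle⟩ := key
  have h0 : 0 < S a lam := by rw [hS]; positivity
  have h1 : S a lam ≤ 1 := by rw [hS]; exact (div_le_one hpos).2 hle
  exact ⟨h0, h1, (one_le_div h0).2 h1⟩
end

section
/- For each fixed α ∈ (0,1), the function λ ↦ f(α,λ) is monotonically decreasing (antitone) on [0,1). -/
theorem f_eq_aux (a x : ℝ) (ha0 : 0 < a) (ha1 : a < 1) (hx0 : 0 ≤ x) (hx1 : x < 1) :
    f a x = ((2 - a * x - a) + (1 - x) * Real.sqrt (4 * a - 3 * a ^ 2)) / (2 * (1 - a * x)) := by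
  have hs : Real.sqrt (4 * a - 3 * a ^ 2) ^ 2 = 4 * a - 3 * a ^ 2 :=
    Real.sq_sqrt (by nlinarith)
  unfold f
  generalize Real.sqrt (4 * a - 3 * a ^ 2) = s at hs
  have hD : 0 < a * x - a * x ^ 2 - a + 1 := by
    have : 0 ≤ a * (x * (1 - x)) := by
      have : 0 ≤ 1 - x := by linarith
      positivity
    nlinarith
  have hax : 0 < 1 - a * x := by nlinarith
  have key : ((2 - a * x - a) + (x - 1) * s) * ((2 - a * x - a) + (1 - x) * s)
      = 4 * (1 - a) * (a * x - a * x ^ 2 - a + 1) := by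
    linear_combination (-(1 - x) ^ 2) * hs
  have hne : (2 - a * x - a) + (x - 1) * s ≠ 0 := by
    intro h
    rw [h, zero_mul] at key
    have : 0 < 4 * (1 - a) * (a * x - a * x ^ 2 - a + 1) :=
      mul_pos (by linarith) hD
    linarith
  rw [div_eq_div_iff (mul_ne_zero hax.ne' hne) (by positivity)]
  linear_combination (-(1 - a * x)) * key

theorem stmt_13 (a : ℝ) (ha0 : 0 < a) (ha1 : a < 1) :
    AntitoneOn (fun lam => f a lam) (Set.Ico (0 : ℝ) 1) := by
  intro x hx y hy hxy
  obtain ⟨hx0, hx1⟩ := hx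
  obtain ⟨hy0, hy1⟩ := hy
  show f a y ≤ f a x
  rw [f_eq_aux a x ha0 ha1 hx0 hx1, f_eq_aux a y ha0 ha1 hy0 hy1]
  have hs : a ≤ Real.sqrt (4 * a - 3 * a ^ 2) := Real.le_sqrt_of_sq_le (by nlinarith)
  generalize Real.sqrt (4 * a - 3 * a ^ 2) = s at hs
  have hax : 0 < 1 - a * x := by nlinarith
  have hay : 0 < 1 - a * y := by nlinarith
  rw [div_le_div_iff₀ (by positivity) (by positivity)]
  have h : 0 ≤ (1 - a) * (s - a) * (y - x) :=
    mul_nonneg (mul_nonneg (by linarith) (by linarith)) (by linarith)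
  linarith
end
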